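/- Suppose the rates R_1, …, R_n are sustainable. Then the output r of Algorithm 1 simultaneously satisfies all three correctness criteria: (i) for every i, ∑_{j=1}^n r_{i,j} = R_i (Valid Partition Constraint); (ii) for every i, R_i + (n−2)·∑_{k=1}^n r_{k,i} ≤ C_u(i) (Uplink Capacity Constraint); (iii) for every i, ∑_{k ≠ i} ∑_{j=1}^n r_{k,j} ≤ C_d(i) (Downlink Capacity Constraint). In particular, Algorithm 1 produces a witness for Theorem 1. -/

import Mathlib

open Finset

/-- Inner loop of Algorithm 1: processes the column indices `js` in order,
starting from remaining rate `R'` and residual uplink bandwidths `U`.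
For each `j`: if `(n-2)·R' > U j` then `r := U j / (n-2)` else `r := R'`;
then `U j` decreases by `(n-2)·r` and `R'` by `r`; exit early once `R' = 0`.
Returns the assigned row of sub-stream rates and the updated residual uplinks. -/
noncomputable def innerLoop (n : ℕ) : ℝ → (Fin n → ℝ) → List (Fin n) → (Fin n → ℝ) × (Fin n → ℝ)
  | _, U, [] => (fun _ => 0, U)
  | R', U, j :: js =>
      let rij : ℝ := if (n - 2 : ℝ) * R' > U j then U j / (n - 2 : ℝ) else R'
      let U' : Fin n → ℝ := Function.update U j (U j - (n - 2 : ℝ) * rij)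
      if R' - rij = 0 then
        (Function.update (fun _ => (0 : ℝ)) j rij, U')
      else
        let rest := innerLoop n (R' - rij) U' js
        (Function.update rest.1 j rij, rest.2)

/-- Outer loop of Algorithm 1 over the list `is` of row indices, carrying the
rate matrix `r` computed so far and the residual uplinks `U`. -/
noncomputable def outerLoop (n : ℕ) (R : Fin n → ℝ) :
    (Fin n → Fin n → ℝ) → (Fin n → ℝ) → List (Fin n) → (Fin n → Fin n → ℝ) × (Fin n → ℝ)
  | r, U, [] => (r, U)
  | r, U, i :: is =>
      let res := innerLoop n (R i) U (List.finRange n)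
      outerLoop n R (Function.update r i res.1) res.2 is

/-- The matrix of sub-stream rates output by Algorithm 1, with initial
residual uplinks `U j := Cu j - R j` and rows/columns processed in order. -/
noncomputable def algOutput (n : ℕ) (Cu R : Fin n → ℝ) : Fin n → Fin n → ℝ :=
  (outerLoop n R (fun _ _ => 0) (fun j => Cu j - R j) (List.finRange n)).1

/-- `Ustart n Cu R k i` is the residual uplink bandwidth `U_i` after the first `k`
outer-loop iterations of Algorithm 1, i.e. the value `U_i[k+1]` at the start of
(1-indexed) outer-loop iteration `k+1`. -/
noncomputable def Ustart (n : ℕ) (Cu R : Fin n → ℝ) (k : ℕ) : Fin n → ℝ :=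
  (outerLoop n R (fun _ _ => 0) (fun j => Cu j - R j) ((List.finRange n).take k)).2

/-- The rates `R` are sustainable w.r.t. uplink capacities `Cu` and downlink
capacities `Cd`: (1) `R i ≤ Cu i`; (2) `∑_{j ≠ i} R j ≤ Cd i`;
(3) `(n-1)·∑ R ≤ ∑ Cu`. -/
def Sustainable (n : ℕ) (Cu Cd R : Fin n → ℝ) : Prop :=
  (∀ i, R i ≤ Cu i) ∧
  (∀ i : Fin n, ∑ j ∈ Finset.univ.erase i, R j ≤ Cd i) ∧
  ((n : ℝ) - 1) * (∑ i, R i) ≤ ∑ i, Cu i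

/-!
A step of the inner loop with remaining rate `R'` and residual uplink `u` lowers `(n - 2) R'` and
`u` by the same amount, `min ((n - 2) R') u`. Residual uplinks therefore stay nonnegative, which is
the uplink constraint. Moreover `R'` can only survive a full pass if `(n - 2) R'` exceeds the
total residual uplink, and each row `i` lowers that total by exactly `(n - 2) R i`. Sustainability,
rewritten as `(n - 2) ∑ R ≤ ∑ (Cu - R)`, says that the total suffices for all rows together.
-/

theorem sum_update_of_eq_zero {ι M : Type*} [Fintype ι] [DecidableEq ι] [AddCommMonoid M]
    {f : ι → M} {i : ι} (hi : f i = 0) (x : M) :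
    ∑ k, Function.update f i x k = x + ∑ k, f k := by
  rw [sum_update_of_mem (mem_univ i), sdiff_singleton_eq_erase, sum_erase _ hi]

section InnerLoop

variable {n : ℕ} {R' u : ℝ} {U : Fin n → ℝ} {j : Fin n} {js : List (Fin n)}

/-- The rate that one step of Algorithm 1 assigns to a sub-stream, when `R'` is the remaining rate
of the source and `u` the residual uplink of the relay. -/
noncomputable def subStreamRate (n : ℕ) (R' u : ℝ) : ℝ :=
  if (n - 2 : ℝ) * R' > u then u / (n - 2 : ℝ) else R'

theorem subStreamRate_le (hn : (0 : ℝ) < n - 2) : subStreamRate n R' u ≤ R' := by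
  unfold subStreamRate
  split_ifs with h
  · exact (div_le_iff₀' hn).2 h.le
  · exact le_rfl

theorem mul_subStreamRate (hu : 0 ≤ u) :
    (n - 2 : ℝ) * subStreamRate n R' u = min ((n - 2) * R') u := by
  unfold subStreamRate
  split_ifs with h
  · have hn : (n - 2 : ℝ) ≠ 0 := by
      intro hn
      rw [hn, zero_mul] at h
      exact h.not_ge hu
    rw [mul_div_cancel₀ _ hn, min_eq_right h.le]
  · rw [min_eq_left (not_lt.1 h)]

/-- The residual uplinks of Algorithm 1 after the step that makes site `j` a relay for a source
with remaining rate `R'`. -/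
noncomputable def relayResidual (n : ℕ) (R' : ℝ) (U : Fin n → ℝ) (j : Fin n) : Fin n → ℝ :=
  Function.update U j (U j - (n - 2 : ℝ) * subStreamRate n R' (U j))

theorem relayResidual_self :
    relayResidual n R' U j j = U j - (n - 2 : ℝ) * subStreamRate n R' (U j) :=
  Function.update_self _ _ _

theorem relayResidual_of_ne {k : Fin n} (hkj : k ≠ j) : relayResidual n R' U j k = U k :=
  Function.update_of_ne hkj _ _

theorem relayResidual_nonneg (hU : 0 ≤ U) : 0 ≤ relayResidual n R' U j := by
  refine le_update_iff.2 ⟨?_, fun k _ => hU k⟩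
  rw [Pi.zero_apply, mul_subStreamRate (hU j)]
  exact sub_nonneg.2 (min_le_right _ _)

theorem innerLoop_zero_left (hU : 0 ≤ U) : innerLoop n 0 U js = (0, U) := by
  cases js with
  | nil => rfl
  | cons j js =>
    have hj : ¬U j < 0 := not_lt.2 (hU j)
    simp [innerLoop, hj, ← Pi.zero_def]

-- The early exit is invisible: with no rate left, the remaining steps assign nothing.
theorem innerLoop_cons (hU : 0 ≤ U) :
    innerLoop n R' U (j :: js) =
      (Function.update (innerLoop n (R' - subStreamRate n R' (U j)) (relayResidual n R' U j) js).1
        j (subStreamRate n R' (U j)),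
      (innerLoop n (R' - subStreamRate n R' (U j)) (relayResidual n R' U j) js).2) := by
  by_cases h : R' - subStreamRate n R' (U j) = 0
  · rw [h, innerLoop_zero_left (relayResidual_nonneg hU)]
    exact if_pos h
  · exact if_neg h

theorem innerLoop_fst_of_notMem (hj : j ∉ js) : (innerLoop n R' U js).1 j = 0 := by
  induction js generalizing R' U with
  | nil => rfl
  | cons i js ih =>
    obtain ⟨hji, hjs⟩ := not_or.1 (mt List.mem_cons.2 hj)
    dsimp only [innerLoop]
    split_ifs <;> simp [hji, ih hjs]

theorem innerLoop_snd_nonneg (hU : 0 ≤ U) : 0 ≤ (innerLoop n R' U js).2 := by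
  induction js generalizing R' U with
  | nil => exact hU
  | cons j js ih =>
    rw [innerLoop_cons hU]
    exact ih (relayResidual_nonneg hU)

theorem innerLoop_snd (hU : 0 ≤ U) (hnodup : js.Nodup) :
    (innerLoop n R' U js).2 = U - (n - 2 : ℝ) • (innerLoop n R' U js).1 := by
  induction js generalizing R' U with
  | nil => simp [innerLoop, ← Pi.zero_def]
  | cons j js ih =>
    obtain ⟨hj, hnodup⟩ := List.nodup_cons.1 hnodup
    have hU' : 0 ≤ relayResidual n R' U j := relayResidual_nonneg hU
    rw [innerLoop_cons hU, ih hU' hnodup]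
    ext k
    rcases eq_or_ne k j with rfl | hkj
    · simp [innerLoop_fst_of_notMem hj, relayResidual_self]
    · simp [relayResidual_of_ne hkj, hkj]

theorem sum_innerLoop_fst (hn : (0 : ℝ) < n - 2) (hR' : 0 ≤ R') (hU : 0 ≤ U) (hnodup : js.Nodup)
    (hbudget : (n - 2 : ℝ) * R' ≤ (js.map U).sum) :
    ∑ j, (innerLoop n R' U js).1 j = R' := by
  induction js generalizing R' U with
  | nil =>
    have hR'_nonpos : R' ≤ 0 := nonpos_of_mul_nonpos_right hbudget hn
    simp [innerLoop, hR'_nonpos.antisymm hR']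
  | cons j js ih =>
    obtain ⟨hj, hnodup⟩ := List.nodup_cons.1 hnodup
    have hU' : 0 ≤ relayResidual n R' U j := relayResidual_nonneg hU
    have hmap : js.map (relayResidual n R' U j) = js.map U :=
      List.map_congr_left fun k hk => relayResidual_of_ne (ne_of_mem_of_not_mem hk hj)
    have hrest : (n - 2 : ℝ) * (R' - subStreamRate n R' (U j)) ≤
        (js.map (relayResidual n R' U j)).sum := by
      have hsum : 0 ≤ (js.map U).sum := List.sum_nonneg (List.forall_mem_map.2 fun k _ => hU k)
      rw [List.map_cons, List.sum_cons] at hbudget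
      rw [hmap, mul_sub, mul_subStreamRate (hU j), sub_le_comm]
      exact le_min (by linarith) (by linarith)
    rw [innerLoop_cons hU, sum_update_of_eq_zero (innerLoop_fst_of_notMem hj),
      ih (sub_nonneg.2 (subStreamRate_le hn)) hU' hnodup hrest, add_sub_cancel]

end InnerLoop

section OuterLoop

variable {n : ℕ} {R U : Fin n → ℝ} {r : Fin n → Fin n → ℝ} {i : Fin n} {is : List (Fin n)}

theorem outerLoop_fst_of_notMem (hi : i ∉ is) : (outerLoop n R r U is).1 i = r i := by
  induction is generalizing r U with
  | nil => rfl
  | cons k is ih =>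
    obtain ⟨hik, his⟩ := not_or.1 (mt List.mem_cons.2 hi)
    rw [outerLoop, ih his, Function.update_of_ne hik]

theorem outerLoop_snd_nonneg (hU : 0 ≤ U) : 0 ≤ (outerLoop n R r U is).2 := by
  induction is generalizing r U with
  | nil => exact hU
  | cons _ _ ih => exact ih (innerLoop_snd_nonneg hU)

theorem outerLoop_snd_add_smul_sum_fst (hU : 0 ≤ U) (hnodup : is.Nodup) (hr : ∀ i ∈ is, r i = 0) :
    (outerLoop n R r U is).2 + (n - 2 : ℝ) • ∑ k, (outerLoop n R r U is).1 k =
      U + (n - 2 : ℝ) • ∑ k, r k := by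
  induction is generalizing r U with
  | nil => rfl
  | cons i is ih =>
    obtain ⟨hi, hnodup⟩ := List.nodup_cons.1 hnodup
    obtain ⟨hri, hr⟩ := List.forall_mem_cons.1 hr
    have hr' (row : Fin n → ℝ) : ∀ k ∈ is, Function.update r i row k = 0 := fun k hk => by
      rw [Function.update_of_ne (ne_of_mem_of_not_mem hk hi), hr k hk]
    rw [outerLoop, ih (innerLoop_snd_nonneg hU) hnodup (hr' _), sum_update_of_eq_zero hri,
      innerLoop_snd hU (List.nodup_finRange n), smul_add]
    abel

theorem sum_outerLoop_fst (hn : (0 : ℝ) < n - 2) (hR : 0 ≤ R) (hU : 0 ≤ U) (hnodup : is.Nodup)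
    (hbudget : (n - 2 : ℝ) * (is.map R).sum ≤ ∑ j, U j) (hi : i ∈ is) :
    ∑ j, (outerLoop n R r U is).1 i j = R i := by
  induction is generalizing r U with
  | nil => exact absurd hi List.not_mem_nil
  | cons k is ih =>
    obtain ⟨hk, hnodup⟩ := List.nodup_cons.1 hnodup
    rw [List.map_cons, List.sum_cons, mul_add] at hbudget
    have hrow : ∑ j, (innerLoop n (R k) U (List.finRange n)).1 j = R k := by
      refine sum_innerLoop_fst hn (hR k) hU (List.nodup_finRange n) ?_
      have hsum : 0 ≤ (is.map R).sum := List.sum_nonneg (List.forall_mem_map.2 fun k _ => hR k)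
      rw [← List.ofFn_eq_map, List.sum_ofFn]
      linarith [mul_nonneg hn.le hsum]
    have hresidual : ∑ j, (innerLoop n (R k) U (List.finRange n)).2 j =
        ∑ j, U j - (n - 2 : ℝ) * R k := by
      simp only [innerLoop_snd hU (List.nodup_finRange n), Pi.sub_apply, Pi.smul_apply,
        smul_eq_mul, sum_sub_distrib, ← mul_sum, hrow]
    rcases List.mem_cons.1 hi with rfl | hi
    · rw [outerLoop, outerLoop_fst_of_notMem hk, Function.update_self, hrow]
    · exact ih (innerLoop_snd_nonneg hU) hnodup (by rw [hresidual]; linarith) hi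

end OuterLoop

section Algorithm

variable {n : ℕ} {Cu R : Fin n → ℝ}

theorem sum_algOutput_row (hn : 3 ≤ n) (hR : 0 ≤ R) (hRCu : R ≤ Cu)
    (hsum : ((n : ℝ) - 1) * ∑ i, R i ≤ ∑ i, Cu i) (i : Fin n) :
    ∑ j, algOutput n Cu R i j = R i := by
  have hn' : (0 : ℝ) < n - 2 := by
    have : (3 : ℝ) ≤ n := by exact_mod_cast hn
    linarith
  refine sum_outerLoop_fst hn' hR (sub_nonneg.2 hRCu) (List.nodup_finRange n) ?_
    (List.mem_finRange i)
  rw [← List.ofFn_eq_map, List.sum_ofFn, sum_sub_distrib]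
  linarith

theorem add_mul_sum_algOutput_col_le (hRCu : R ≤ Cu) (i : Fin n) :
    R i + ((n : ℝ) - 2) * ∑ k, algOutput n Cu R k i ≤ Cu i := by
  have hU : 0 ≤ fun j => Cu j - R j := sub_nonneg.2 hRCu
  have hresidual : 0 ≤ (outerLoop n R (fun _ _ => 0) (fun j => Cu j - R j) (List.finRange n)).2 i :=
    outerLoop_snd_nonneg hU i
  have hbalance := congrFun (outerLoop_snd_add_smul_sum_fst (R := R) (r := fun _ _ => 0) hU
    (List.nodup_finRange n) fun _ _ => rfl) i
  simp only [Pi.add_apply, Pi.smul_apply, Finset.sum_apply, smul_eq_mul, sum_const_zero, mul_zero,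
    add_zero] at hbalance
  unfold algOutput
  linarith

end Algorithm

/-- If the rates are sustainable, the output of Algorithm 1
simultaneously satisfies all three correctness criteria: (i) Valid Partition,
(ii) Uplink Capacity, (iii) Downlink Capacity — hence it is a witness for
Theorem 1. -/
theorem algorithm_correct (n : ℕ) (hn : 3 ≤ n) (Cu Cd R : Fin n → ℝ)
    (hCu : ∀ i, 0 < Cu i) (hCd : ∀ i, 0 < Cd i) (hR : ∀ i, 0 < R i)
    (hsus : Sustainable n Cu Cd R) :
    (∀ i : Fin n, ∑ j, algOutput n Cu R i j = R i) ∧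
    (∀ i : Fin n, R i + ((n : ℝ) - 2) * (∑ k, algOutput n Cu R k i) ≤ Cu i) ∧
    (∀ i : Fin n, ∑ k ∈ Finset.univ.erase i, ∑ j, algOutput n Cu R k j ≤ Cd i) := by
  obtain ⟨hRCu, hRCd, hsum⟩ := hsus
  have hrow : ∀ i, ∑ j, algOutput n Cu R i j = R i :=
    sum_algOutput_row hn (fun i => (hR i).le) hRCu hsum
  refine ⟨hrow, add_mul_sum_algOutput_col_le hRCu, fun i => ?_⟩
  simp only [hrow]
  exact hRCd i
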